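/- arXiv:1501.04354 — 2 statements merged into one kernel-verified Lean document; each statement's English description precedes it below -/
import Mathlib

section
/- Suppose mul : ℕ → Stream' ℕ → Stream' ℕ satisfies mul k (y :: t) = (k * y) :: mul k t for all k, y, t, and mg : Stream' ℕ → Stream' ℕ → Stream' ℕ satisfies mg (x :: t₁) (y :: t₂) = (if x ≤ y then x :: mg t₁ (y :: t₂) else y :: mg (x :: t₁) t₂) for all x, y, t₁, t₂. Then there exists exactly one stream H : Stream' ℕ such that H = 1 :: mg (mg (mul 2 H) (mul 3 H)) (mul 5 H). -/
/-!
Multiplication and merging are causal: the first `n` entries of their output depend only on the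
first `n` entries of their inputs. For a causal `F`, each unfolding of `H = a :: F H` therefore
determines one further entry of `H`: two solutions agree on ever longer prefixes, and the iterates
of `s ↦ a :: F s` from any starting stream stabilize entrywise to a solution.
-/

section FixedPoint

variable {α β : Type*}

/-- A stream function is causal if any prefix of its input determines the prefix of the same length
of its output. In terms of production functions, it produces at least `n` entries from `n` entries.
Agreement of prefixes is encoded as equality of the lists `Stream'.take n`. -/
def Causal (F : Stream' α → Stream' β) : Prop :=
  ∀ ⦃n : ℕ⦄ ⦃s t : Stream' α⦄, s.take n = t.take n → (F s).take n = (F t).take n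

theorem exists_forall_take_eq_take {u : ℕ → Stream' α}
    (hu : ∀ n, (u (n + 1)).take n = (u n).take n) :
    ∃ s : Stream' α, ∀ n, s.take n = (u n).take n := by
  let s : Stream' α := fun n ↦ (u (n + 1)).get n
  refine ⟨s, fun n ↦ ?_⟩
  induction n with
  | zero => rfl
  | succ n ih =>
    calc s.take (n + 1) = s.take n ++ [s.get n] := Stream'.take_succ' n
      _ = (u (n + 1)).take n ++ [(u (n + 1)).get n] := by rw [ih, hu]; rfl
      _ = (u (n + 1)).take (n + 1) := (Stream'.take_succ' n).symm

namespace Causal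

variable {F : Stream' α → Stream' α}

theorem take_succ_cons_eq (hF : Causal F) (a : α) {n : ℕ} {s t : Stream' α}
    (h : s.take n = t.take n) :
    (Stream'.cons a (F s)).take (n + 1) = (Stream'.cons a (F t)).take (n + 1) := by
  rw [Stream'.take_succ_cons, Stream'.take_succ_cons, hF h]

theorem take_iterate_cons_eq (hF : Causal F) (a : α) (n : ℕ) (s t : Stream' α) :
    ((fun s ↦ Stream'.cons a (F s))^[n] s).take n =
      ((fun s ↦ Stream'.cons a (F s))^[n] t).take n := by
  induction n with
  | zero => rfl
  | succ n ih =>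
    rw [Function.iterate_succ_apply', Function.iterate_succ_apply']
    exact hF.take_succ_cons_eq a ih

theorem exists_eq_cons (hF : Causal F) (a : α) : ∃ s, s = Stream'.cons a (F s) := by
  let G : Stream' α → Stream' α := fun s ↦ Stream'.cons a (F s)
  let c : Stream' α := Stream'.const a
  obtain ⟨s, hs⟩ : ∃ s : Stream' α, ∀ n, s.take n = (G^[n] c).take n :=
    exists_forall_take_eq_take fun n ↦ hF.take_iterate_cons_eq a n (G c) c
  refine ⟨s, Stream'.take_theorem _ _ fun n ↦ ?_⟩
  cases n with
  | zero => rfl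
  | succ n =>
    calc s.take (n + 1) = (G (G^[n] c)).take (n + 1) := by
          rw [hs, Function.iterate_succ_apply']
      _ = (G s).take (n + 1) := hF.take_succ_cons_eq a (hs n).symm

theorem eq_of_eq_cons (hF : Causal F) {a : α} {s t : Stream' α}
    (hs : s = Stream'.cons a (F s)) (ht : t = Stream'.cons a (F t)) : s = t := by
  refine Stream'.take_theorem _ _ fun n ↦ ?_
  induction n with
  | zero => rfl
  | succ n ih =>
    calc s.take (n + 1) = (Stream'.cons a (F s)).take (n + 1) := congrArg _ hs
      _ = (Stream'.cons a (F t)).take (n + 1) := hF.take_succ_cons_eq a ih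
      _ = t.take (n + 1) := congrArg _ ht.symm

theorem existsUnique_eq_cons (hF : Causal F) (a : α) : ∃! s, s = Stream'.cons a (F s) :=
  existsUnique_of_exists_of_unique (hF.exists_eq_cons a) fun _ _ ↦ hF.eq_of_eq_cons

end Causal

end FixedPoint

section Map

variable {α β : Type*} {f : α → β} {F : Stream' α → Stream' β}

theorem take_eq_map_take_of_forall_cons
    (hF : ∀ a s, F (Stream'.cons a s) = Stream'.cons (f a) (F s))
    (n : ℕ) (s : Stream' α) : (F s).take n = (s.take n).map f := by
  induction n generalizing s with
  | zero => rfl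
  | succ n ih =>
    rw [← s.eta, hF, Stream'.take_succ_cons, Stream'.take_succ_cons, List.map_cons, ih]

theorem causal_of_forall_cons (hF : ∀ a s, F (Stream'.cons a s) = Stream'.cons (f a) (F s)) :
    Causal F := fun n s t h ↦ by
  rw [take_eq_map_take_of_forall_cons hF, take_eq_map_take_of_forall_cons hF, h]

end Map

section Merge

variable {α β : Type*} [LE β] [DecidableLE β]

/-- The defining equation of the merge of two streams, which keeps taking the smaller head and
prefers the left one on ties. It is imposed on all streams, sorted or not. -/
def IsMerge (mg : Stream' β → Stream' β → Stream' β) : Prop :=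
  ∀ x y s t, mg (Stream'.cons x s) (Stream'.cons y t) =
    if x ≤ y then Stream'.cons x (mg s (Stream'.cons y t))
    else Stream'.cons y (mg (Stream'.cons x s) t)

namespace IsMerge

variable {mg : Stream' β → Stream' β → Stream' β}

-- Each step consumes only one input, so the induction needs prefixes of different lengths.
theorem take_eq_take_merge_take (hmg : IsMerge mg) {n k l : ℕ} (hk : n ≤ k) (hl : n ≤ l)
    (s t : Stream' β) : (mg s t).take n = ((s.take k).merge (t.take l)).take n := by
  induction n generalizing k l s t with
  | zero => rfl
  | succ n ih =>
    obtain ⟨k, rfl⟩ := Nat.exists_eq_add_one.mpr (Nat.zero_lt_of_lt hk)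
    obtain ⟨l, rfl⟩ := Nat.exists_eq_add_one.mpr (Nat.zero_lt_of_lt hl)
    obtain ⟨x, s, rfl⟩ : ∃ x s', s = Stream'.cons x s' := ⟨_, _, s.eta.symm⟩
    obtain ⟨y, t, rfl⟩ : ∃ y t', t = Stream'.cons y t' := ⟨_, _, t.eta.symm⟩
    rw [hmg, Stream'.take_succ_cons, Stream'.take_succ_cons, List.cons_merge_cons]
    simp only [decide_eq_true_eq]
    split_ifs
    · rw [Stream'.take_succ_cons, List.take_succ_cons,
        ih (k := k) (l := l + 1) (by lia) (by lia), Stream'.take_succ_cons]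
    · rw [Stream'.take_succ_cons, List.take_succ_cons,
        ih (k := k + 1) (l := l) (by lia) (by lia), Stream'.take_succ_cons]

theorem causal (hmg : IsMerge mg) {F G : Stream' α → Stream' β} (hF : Causal F) (hG : Causal G) :
    Causal fun s ↦ mg (F s) (G s) := fun n s t h ↦ by
  simp only [hmg.take_eq_take_merge_take le_rfl le_rfl, hF h, hG h]

end IsMerge

end Merge

theorem stmt5_general {α : Type*} [Mul α] [LE α] [DecidableLE α]
    {mul : α → Stream' α → Stream' α}
    (hmul : ∀ k y t, mul k (Stream'.cons y t) = Stream'.cons (k * y) (mul k t))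
    {mg : Stream' α → Stream' α → Stream' α} (hmg : IsMerge mg) (a p q r : α) :
    ∃! H : Stream' α, H = Stream'.cons a (mg (mg (mul p H) (mul q H)) (mul r H)) := by
  have causal_mul (k : α) : Causal (mul k) := causal_of_forall_cons (hmul k)
  have causal_mg : Causal fun H ↦ mg (mg (mul p H) (mul q H)) (mul r H) :=
    hmg.causal (hmg.causal (causal_mul p) (causal_mul q)) (causal_mul r)
  exact causal_mg.existsUnique_eq_cons a

/-- The paper's corecursive specification of the Hamming stream `H`:
`H = 1 :: merge (merge (mul 2 H) (mul 3 H)) (mul 5 H)` has exactly one solution. -/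
theorem stmt5 (mul : ℕ → Stream' ℕ → Stream' ℕ)
    (hmul : ∀ (k y : ℕ) (t : Stream' ℕ),
      mul k (Stream'.cons y t) = Stream'.cons (k * y) (mul k t))
    (mg : Stream' ℕ → Stream' ℕ → Stream' ℕ)
    (hmg : ∀ (x y : ℕ) (t₁ t₂ : Stream' ℕ),
      mg (Stream'.cons x t₁) (Stream'.cons y t₂) =
        (if x ≤ y then Stream'.cons x (mg t₁ (Stream'.cons y t₂))
         else Stream'.cons y (mg (Stream'.cons x t₁) t₂))) :
    ∃! H : Stream' ℕ,
      H = Stream'.cons 1 (mg (mg (mul 2 H) (mul 3 H)) (mul 5 H)) :=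
  stmt5_general hmul hmg 1 2 3 5
end

section
/- Let A be a partial order with least element and B a CPO, i.e., a partial order with least element in which every nonempty directed subset has a least upper bound. Let F : (A → B) → (A → B) be monotone with respect to the pointwise order, and suppose that F g is a monotone function whenever g : A → B is monotone. If f₀ : A → B is a least fixpoint of F (i.e., F f₀ = f₀ and f₀ ≤ g pointwise for every g with F g = g), then f₀ is monotone. -/
/-!
A directed-sup-closed set `s` mapped into itself by a monotone `f` contains a fixed point below any
`b` with `f b ≤ b`, provided it contains some `a ≤ b` with `a ≤ f a`. Indeed, by Zorn's lemma
`s ∩ {y | y ≤ f y} ∩ Iic b` has a maximal element; `f` maps this set into itself, so a maximal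
element `m ≤ f m` satisfies `f m = m`. Taking `a = ⊥` and `b` the least fixed point of `f` yields
fixed-point induction. Pointwise suprema of monotone functions are monotone, so the induction
applies to the set of monotone functions.
-/

open Function Set

section DirSupClosed

variable {α β : Type*} [Preorder α] [Preorder β]

theorem dirSupClosed_setOfPred_le_map {f : α → α} (hf : Monotone f) :
    DirSupClosed {x | x ≤ f x} :=
  fun _ hd _ _ _ hx ↦ hx.2 fun _ hy ↦ (hd hy).trans (hf (hx.1 hy))

theorem dirSupClosed_setOfPred_monotone : DirSupClosed {g : α → β | Monotone g} := by
  intro d hd _ _ g hg x y hxy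
  refine (isLUB_pi.1 hg x).2 (forall_mem_image.2 fun h hh ↦ ?_)
  exact (hd hh hxy).trans (hg.1 hh y)

end DirSupClosed

section ConditionallyComplete

variable {α : Type*} [ConditionallyCompletePartialOrderSup α] {s : Set α} {f : α → α} {a b x : α}

theorem exists_le_maximal_of_dirSupClosed (hs : DirSupClosed s) (hbdd : BddAbove s) (ha : a ∈ s) :
    ∃ m, a ≤ m ∧ Maximal (· ∈ s) m := by
  refine zorn_le_nonempty₀ s (fun c hcs hc y hy ↦ ?_) a ha
  have hlub : IsLUB c (sSup c) := hc.directedOn.isLUB_csSup ⟨y, hy⟩ (hbdd.mono hcs)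
  exact ⟨sSup c, hs hcs ⟨y, hy⟩ hc.directedOn hlub, hlub.1⟩

theorem exists_isFixedPt_mem_Icc_of_dirSupClosed (hf : Monotone f) (hs : DirSupClosed s)
    (hfs : MapsTo f s s) (has : a ∈ s) (ha : a ≤ f a) (hab : a ≤ b) (hb : f b ≤ b) :
    ∃ y ∈ s, IsFixedPt f y ∧ y ∈ Icc a b := by
  have hclosed : DirSupClosed (s ∩ {y | y ≤ f y} ∩ Iic b) :=
    (hs.inter (dirSupClosed_setOfPred_le_map hf)).inter (dirSupClosed_Iic b)
  have hbdd : BddAbove (s ∩ {y | y ≤ f y} ∩ Iic b) := bddAbove_Iic.mono inter_subset_right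
  obtain ⟨m, ham, ⟨⟨hms, hmf⟩, hmb⟩, hmax⟩ :=
    exists_le_maximal_of_dirSupClosed hclosed hbdd ⟨⟨has, ha⟩, hab⟩
  have hfm : f m ≤ m := hmax ⟨⟨hfs hms, hf hmf⟩, (hf hmb).trans hb⟩ hmf
  exact ⟨m, hms, hfm.antisymm hmf, ham, hmb⟩

theorem mem_of_isLeast_fixedPoints_of_dirSupClosed [OrderBot α] (hf : Monotone f)
    (hs : DirSupClosed s) (hfs : MapsTo f s s) (hbot : ⊥ ∈ s) (hx : IsLeast (fixedPoints f) x) :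
    x ∈ s := by
  obtain ⟨y, hys, hy, -, hyx⟩ :=
    exists_isFixedPt_mem_Icc_of_dirSupClosed hf hs hfs hbot bot_le bot_le hx.1.le
  rwa [(hx.2 hy).antisymm hyx]

end ConditionallyComplete

instance piConditionallyCompletePartialOrderSup {ι : Type*} {π : ι → Type*}
    [∀ i, ConditionallyCompletePartialOrderSup (π i)] :
    ConditionallyCompletePartialOrderSup (∀ i, π i) where
  isLUB_csSup_of_directed _ hdir hne hbdd := isLUB_pi.2 fun i ↦ by
    rw [sSup_apply_eq_sSup_image]
    exact (hdir.mono_comp (monotone_eval i)).isLUB_csSup (hne.image _)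
      ((monotone_eval i).map_bddAbove hbdd)

theorem stmt11_general {A B : Type*} [Preorder A] [ConditionallyCompletePartialOrderSup B]
    [OrderBot B] (F : (A → B) → (A → B)) (hF : Monotone F)
    (hmono : ∀ g : A → B, Monotone g → Monotone (F g))
    (f₀ : A → B) (hf₀ : IsLeast (fixedPoints F) f₀) :
    Monotone f₀ :=
  mem_of_isLeast_fixedPoints_of_dirSupClosed hF dirSupClosed_setOfPred_monotone hmono
    monotone_const hf₀

/-- If `F` on the pointwise-ordered function space `A → B` (with `B` a CPO) is
monotone and maps monotone functions to monotone functions, then its least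
fixpoint is monotone. -/
theorem stmt11 {A B : Type*} [PartialOrder A] [OrderBot A]
    [CompletePartialOrder B] [OrderBot B]
    (F : (A → B) → (A → B)) (hF : Monotone F)
    (hmono : ∀ g : A → B, Monotone g → Monotone (F g))
    (f₀ : A → B) (hfix : F f₀ = f₀) (hleast : ∀ g : A → B, F g = g → f₀ ≤ g) :
    Monotone f₀ :=
  stmt11_general F hF hmono f₀ ⟨hfix, hleast⟩
end
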